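/- arXiv:1509.07235 — 3 statements merged into one kernel-verified Lean document; each statement's English description precedes it below -/
import Mathlib

section
/- For any ring R and R-module M with n ≥ 1, fd_R(M) ≤ n if and only if Ext^n_R(M,W)=0 for every weak-injective (L_1-injective) R-module W. -/
open CategoryTheory

/-- Flatness of a module over an arbitrary (possibly noncommutative) ring,
via the equational criterion: every relation is a consequence of trivial relations. -/
def IsFlatMod (R : Type) [Ring R] (M : Type) [AddCommGroup M] [Module R M] : Prop :=
  ∀ (ι : Type) (_ : Fintype ι) (r : ι → R) (x : ι → M),
    (∑ i, r i • x i = 0) →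
      ∃ (κ : Type) (_ : Fintype κ) (a : ι → κ → R) (y : κ → M),
        (∀ i, x i = ∑ j, a i j • y j) ∧ ∀ j, (∑ i, r i * a i j) = 0

variable (R : Type) [Ring R]

/-- `Ext^n_R(M, N) = 0`. -/
def extVanish (n : ℕ) (M N : ModuleCat.{0} R) : Prop :=
  Subsingleton (((Ext ℤ (ModuleCat.{0} R) n).obj (Opposite.op M)).obj N)

/-- `M` has flat dimension at most `n`. -/
def fdLE : ℕ → ModuleCat.{0} R → Prop
  | 0, M => IsFlatMod R M
  | n+1, M => ∃ (K F : ModuleCat.{0} R) (f : K ⟶ F) (g : F ⟶ M),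
      IsFlatMod R F ∧ Function.Injective f ∧ Function.Surjective g ∧
        Function.Exact f g ∧ fdLE n K

/-- `W` is `L_n`-injective: `Ext^1_R(M, W) = 0` for every `M` of flat dimension at most `n`. -/
def LnInj (n : ℕ) (W : ModuleCat.{0} R) : Prop :=
  ∀ M : ModuleCat.{0} R, fdLE R n M → extVanish R 1 M W

/-!
Flat dimension is detected by the character modules `N⁺` of right modules: `fd M ≤ n` if and only
if `Ext^(n+1)(M, N⁺) = 0` for all `N`. By dimension shifting this reduces to `n = 0`. Write
`M = P ⧸ K` with `P` projective, so that `Ext¹(M, N⁺) = 0` says that every map `K → N⁺` extends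
to `P`. If `M` is flat, then by Villamayor's argument `K → P` has a retraction on each finite subset
of `K`, so the required extension exists on finite subsets, hence globally because `N⁺` is
algebraically compact. Conversely, extending the maps `K → (R ⧸ J)⁺` for all right ideals `J` gives
`J P ∩ K = J K`, which is the equational criterion for `M`.

Now embed `N⁺` in an injective module with cokernel `W`. Since `Ext^i(-, W) = Ext^(i+1)(-, N⁺)` for
`i ≥ 1`, the module `W` is weak-injective and `Ext^n(M, W) = 0` means `Ext^(n+1)(M, N⁺) = 0`.
-/

section Ext

universe w v u

variable {C : Type u} [Category.{v} C] [Abelian C] [HasExt.{w} C]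

theorem subsingleton_ext_succ_iff (k : Type*) [Ring k] [Linear k C] [EnoughProjectives C]
    (X Y : C) (n : ℕ) :
    Subsingleton (((Ext k C (n + 1)).obj (Opposite.op X)).obj Y) ↔
      Subsingleton (Abelian.Ext X Y (n + 1)) := by
  let P := ProjectiveResolution.of X
  have exactAt_iff : Subsingleton (((Ext k C (n + 1)).obj (Opposite.op X)).obj Y) ↔
      (P.complex.linearYonedaObj k Y).ExactAt (n + 1) := by
    rw [← ModuleCat.isZero_iff_subsingleton, HomologicalComplex.exactAt_iff_isZero_homology]
    exact (P.isoExt (n + 1) Y).isZero_iff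
  rw [exactAt_iff, HomologicalComplex.exactAt_iff' _ n (n + 1) (n + 2) (by simp) (by simp),
    ShortComplex.moduleCat_exact_iff]
  constructor
  · intro cocycle_is_coboundary
    refine subsingleton_of_forall_eq 0 fun x => ?_
    obtain ⟨f, hf, rfl⟩ := P.extMk_surjective x (n + 2) rfl
    exact (P.extMk_eq_zero_iff f (n + 2) rfl hf n rfl).2 (cocycle_is_coboundary f hf)
  · intro _ f hf
    exact (P.extMk_eq_zero_iff f (n + 2) rfl hf n rfl).1 (Subsingleton.elim _ _)

variable {S : ShortComplex C} (hS : S.ShortExact)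
include hS

theorem subsingleton_ext_X₁_of_X₂_of_X₃ (Y : C) (n : ℕ)
    [Subsingleton (Abelian.Ext S.X₂ Y n)] [Subsingleton (Abelian.Ext S.X₃ Y (n + 1))] :
    Subsingleton (Abelian.Ext S.X₁ Y n) := by
  refine subsingleton_of_forall_eq 0 fun x => ?_
  obtain ⟨y, rfl⟩ := Abelian.Ext.contravariant_sequence_exact₁ hS Y x (add_comm 1 n)
    (Subsingleton.elim _ _)
  rw [Subsingleton.elim y 0, Abelian.Ext.comp_zero]

theorem subsingleton_ext_X₃_of_X₁_of_X₂ (Y : C) (n : ℕ)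
    [Subsingleton (Abelian.Ext S.X₁ Y n)] [Subsingleton (Abelian.Ext S.X₂ Y (n + 1))] :
    Subsingleton (Abelian.Ext S.X₃ Y (n + 1)) := by
  refine subsingleton_of_forall_eq 0 fun x => ?_
  obtain ⟨y, rfl⟩ := Abelian.Ext.contravariant_sequence_exact₃ hS Y x
    (Subsingleton.elim _ _) (add_comm 1 n)
  rw [Subsingleton.elim y 0, Abelian.Ext.comp_zero]

theorem subsingleton_ext_X₁_iff_of_projective (Y : C) (n : ℕ) [Projective S.X₂] :
    Subsingleton (Abelian.Ext S.X₁ Y (n + 1)) ↔ Subsingleton (Abelian.Ext S.X₃ Y (n + 2)) := by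
  have := Abelian.Ext.subsingleton_of_projective S.X₂ Y
  exact ⟨fun _ => subsingleton_ext_X₃_of_X₁_of_X₂ hS Y (n + 1),
    fun _ => subsingleton_ext_X₁_of_X₂_of_X₃ hS Y (n + 1)⟩

theorem subsingleton_ext_X₃_iff_of_injective (X : C) (n : ℕ) [Injective S.X₂] :
    Subsingleton (Abelian.Ext X S.X₃ (n + 1)) ↔ Subsingleton (Abelian.Ext X S.X₁ (n + 2)) := by
  have := Abelian.Ext.subsingleton_of_injective X S.X₂
  constructor <;> refine fun _ => subsingleton_of_forall_eq 0 fun x => ?_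
  · obtain ⟨y, rfl⟩ := Abelian.Ext.covariant_sequence_exact₁ X hS x (Subsingleton.elim _ _) rfl
    rw [Subsingleton.elim y 0, Abelian.Ext.zero_comp]
  · obtain ⟨y, rfl⟩ := Abelian.Ext.covariant_sequence_exact₃ X hS x rfl (Subsingleton.elim _ _)
    rw [Subsingleton.elim y 0, Abelian.Ext.zero_comp]

theorem subsingleton_ext_one_iff_exists_extension (Y : C) [Projective S.X₂] :
    Subsingleton (Abelian.Ext S.X₃ Y 1) ↔ ∀ h : S.X₁ ⟶ Y, ∃ l : S.X₂ ⟶ Y, S.f ≫ l = h := by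
  constructor
  · intro _ h
    obtain ⟨y, hy⟩ := Abelian.Ext.contravariant_sequence_exact₁ hS Y (Abelian.Ext.mk₀ h)
      (add_zero 1) (Subsingleton.elim _ _)
    obtain ⟨l, rfl⟩ := Abelian.Ext.addEquiv₀.symm.surjective y
    refine ⟨l, Abelian.Ext.addEquiv₀.symm.injective ?_⟩
    simpa using hy
  · intro extend
    refine subsingleton_of_forall_eq 0 fun x => ?_
    obtain ⟨y, rfl⟩ := Abelian.Ext.contravariant_sequence_exact₃ hS Y x
      (Abelian.Ext.eq_zero_of_projective _) (add_zero 1)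
    obtain ⟨h, rfl⟩ := Abelian.Ext.addEquiv₀.symm.surjective y
    obtain ⟨l, rfl⟩ := extend h
    simp [← Abelian.Ext.mk₀_comp_mk₀]

end Ext

section Character

variable {G H : Type*} [AddCommGroup G] [AddCommGroup H]

theorem exists_character_comp_eq_of_ker_le
    (α : G →ₗ[ℤ] H) (β : G →ₗ[ℤ] AddCircle (1 : ℚ))
    (hαβ : LinearMap.ker α ≤ LinearMap.ker β) :
    ∃ γ : H →+ AddCircle (1 : ℚ), ∀ x, γ (α x) = β x := by
  obtain ⟨γ, hγ⟩ := CharacterModule.dual_surjective_of_injective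
    ((LinearMap.ker α).liftQ α le_rfl)
    (LinearMap.ker_eq_bot.1 (Submodule.ker_liftQ_eq_bot' _ _ rfl))
    ((LinearMap.ker α).liftQ β hαβ).toAddMonoidHom
  exact ⟨γ, fun x => DFunLike.congr_fun hγ (Submodule.Quotient.mk x)⟩

theorem exists_character_ne_zero_of_notMem {L : AddSubgroup G} {x : G} (hx : x ∉ L) :
    ∃ χ : G →+ AddCircle (1 : ℚ), (∀ y ∈ L, χ y = 0) ∧ χ x ≠ 0 := by
  obtain ⟨c, hc⟩ := CharacterModule.exists_character_apply_ne_zero_of_ne_zero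
    (mt (QuotientAddGroup.eq_zero_iff x).1 hx)
  exact ⟨AddMonoidHom.comp c (QuotientAddGroup.mk' L), fun y hy =>
    (congrArg c ((QuotientAddGroup.eq_zero_iff y).2 hy)).trans (map_zero c), hc⟩

theorem map_smul_eq_zero_of_mem_span {A : Type*} [Ring A] [Module A G] (χ : G →+ H) {s : Set A}
    (hs : ∀ a ∈ s, ∀ x, χ (a • x) = 0) {a : A} (ha : a ∈ Submodule.span Aᵐᵒᵖ s) (x : G) :
    χ (a • x) = 0 := by
  induction ha using Submodule.span_induction generalizing x with
  | mem a ha => exact hs a ha x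
  | zero => simp
  | add a b _ _ ha hb => simp [add_smul, ha, hb]
  | smul a b _ hb => simp [mul_smul, hb]

end Character

section CharDual

variable {A : Type*} [Ring A]

/-- The character module `N⁺ = Hom_ℤ(N, ℚ/ℤ)` of a right `A`-module `N`, as a left `A`-module.
Mathlib's `CharacterModule` is a module only over a commutative ring. -/
def CharDual (N : Type*) [AddCommGroup N] := N →+ AddCircle (1 : ℚ)

namespace CharDual

variable {N : Type*} [AddCommGroup N]

instance : AddCommGroup (CharDual N) := inferInstanceAs (AddCommGroup (N →+ _))

instance : FunLike (CharDual N) N (AddCircle (1 : ℚ)) := inferInstanceAs (FunLike (N →+ _) _ _)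

instance : AddMonoidHomClass (CharDual N) N (AddCircle (1 : ℚ)) :=
  inferInstanceAs (AddMonoidHomClass (N →+ _) _ _)

theorem zero_apply (n : N) : (0 : CharDual N) n = 0 := rfl

theorem add_apply (c d : CharDual N) (n : N) : (c + d) n = c n + d n := rfl

theorem sum_apply {ι : Type*} (s : Finset ι) (c : ι → CharDual N) (n : N) :
    (∑ i ∈ s, c i) n = ∑ i ∈ s, c i n :=
  AddMonoidHom.finsetSum_apply (ι := ι) (M := N) c s n

instance [Module Aᵐᵒᵖ N] : SMul A (CharDual N) where
  smul a c := AddMonoidHom.comp c (DistribSMul.toAddMonoidHom N (MulOpposite.op a))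

theorem smul_apply [Module Aᵐᵒᵖ N] (a : A) (c : CharDual N) (n : N) :
    (a • c) n = c (MulOpposite.op a • n) := rfl

instance [Module Aᵐᵒᵖ N] : Module A (CharDual N) where
  one_smul c := DFunLike.ext _ _ fun n => by simp [smul_apply]
  mul_smul a b c := DFunLike.ext _ _ fun n => by simp [smul_apply, mul_smul]
  smul_zero a := rfl
  smul_add a c d := rfl
  add_smul a b c := DFunLike.ext _ _ fun n => by simp [smul_apply, add_apply, add_smul]
  zero_smul c := DFunLike.ext _ _ fun n => by simp [smul_apply, zero_apply]

variable {K P : Type*} [AddCommGroup K] [Module A K] [AddCommGroup P] [Module A P]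

/-- Algebraic compactness of character modules. -/
theorem exists_extension_of_forall_finset [Module Aᵐᵒᵖ N] (f : K →ₗ[A] P) (h : K →ₗ[A] CharDual N)
    (extend : ∀ s : Finset K, ∃ l : P →ₗ[A] CharDual N, ∀ k ∈ s, l (f k) = h k) :
    ∃ l : P →ₗ[A] CharDual N, l ∘ₗ f = h := by
  classical
  -- A formal sum of pairs in `K × N` on which every map `P → N⁺` vanishes is killed by `h`, so `h`
  -- factors through evaluation at all these maps.
  let α := Finsupp.linearCombination ℤ fun (x : K × N) (l : P →ₗ[A] CharDual N) => l (f x.1) x.2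
  let β := Finsupp.linearCombination ℤ fun x : K × N => h x.1 x.2
  have ker_le : LinearMap.ker α ≤ LinearMap.ker β := by
    intro t ht
    obtain ⟨l, hl⟩ := extend (t.support.image Prod.fst)
    have eq_on_support : β t = α t l := by
      simp only [α, β, Finsupp.linearCombination_apply, Finsupp.sum, Finset.sum_apply,
        Pi.smul_apply]
      refine Finset.sum_congr rfl fun x hx => ?_
      rw [hl x.1 (Finset.mem_image_of_mem _ hx)]
    rw [LinearMap.mem_ker, eq_on_support, LinearMap.mem_ker.1 ht, Pi.zero_apply]
  obtain ⟨γ, hγ⟩ := exists_character_comp_eq_of_ker_le α β ker_le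
  let l : P →ₗ[A] CharDual N :=
    { toFun p := γ.comp (AddMonoidHom.pi fun l : P →ₗ[A] CharDual N => l p)
      map_add' p q := DFunLike.ext _ _ fun n =>
        (congrArg γ (funext fun l => DFunLike.congr_fun (map_add l p q) n)).trans (map_add γ _ _)
      map_smul' a p := DFunLike.ext _ _ fun n =>
        congrArg γ (funext fun l => DFunLike.congr_fun (map_smul l a p) n) }
  refine ⟨l, LinearMap.ext fun k => DFunLike.ext _ _ fun n => ?_⟩
  have hγ_single := hγ (Finsupp.single (k, n) 1)
  simp only [α, β, Finsupp.linearCombination_single, one_smul] at hγ_single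
  exact hγ_single

/-- The homomorphism `K → (A ⧸ J)⁺` corresponding to a character of `K` that annihilates `J K`. -/
def ofAnnihilates (J : Submodule Aᵐᵒᵖ A) (c : K →+ AddCircle (1 : ℚ))
    (hc : ∀ j ∈ J, ∀ k, c (j • k) = 0) :
    K →ₗ[A] CharDual (A ⧸ J) where
  toFun k := QuotientAddGroup.lift J.toAddSubgroup (c.comp ((smulAddHom A K).flip k))
    fun j hj => hc j hj k
  map_add' k k' := DFunLike.ext _ _ fun q => by
    obtain ⟨a, rfl⟩ := Submodule.Quotient.mk_surjective J q
    exact (congrArg c (smul_add a k k')).trans (map_add c _ _)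
  map_smul' b k := DFunLike.ext _ _ fun q => by
    obtain ⟨a, rfl⟩ := Submodule.Quotient.mk_surjective J q
    exact congrArg c (mul_smul a b k).symm

theorem ofAnnihilates_mk {J : Submodule Aᵐᵒᵖ A} {c : K →+ AddCircle (1 : ℚ)}
    (hc : ∀ j ∈ J, ∀ k, c (j • k) = 0) (k : K) (a : A) :
    ofAnnihilates J c hc k (Submodule.Quotient.mk a) = c (a • k) :=
  rfl

/-- That is, `J P ∩ K = J K` for the right ideal `J` generated by the `r i`. -/
theorem exists_sum_smul_eq_of_forall_exists_extension (f : K →ₗ[A] P)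
    (extend : ∀ (J : Submodule Aᵐᵒᵖ A) (h : K →ₗ[A] CharDual (A ⧸ J)),
      ∃ l : P →ₗ[A] CharDual (A ⧸ J), l ∘ₗ f = h)
    {ι : Type*} [Fintype ι] (r : ι → A) (p : ι → P) (k : K) (hk : ∑ i, r i • p i = f k) :
    ∃ k' : ι → K, ∑ i, r i • k' i = k := by
  classical
  let μ : (ι → K) →+ K :=
    ∑ i, (DistribSMul.toAddMonoidHom K (r i)).comp (Pi.evalAddMonoidHom (fun _ => K) i)
  have μ_apply (v : ι → K) : μ v = ∑ i, r i • v i := by simp [μ]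
  suffices k ∈ μ.range by simpa [μ_apply] using this
  by_contra hkμ
  obtain ⟨χ, χ_range, hχk⟩ := exists_character_ne_zero_of_notMem hkμ
  let J : Submodule Aᵐᵒᵖ A := Submodule.span Aᵐᵒᵖ (Set.range r)
  have χ_smul : ∀ j ∈ J, ∀ x : K, χ (j • x) = 0 := by
    refine fun j hj => map_smul_eq_zero_of_mem_span χ (Set.forall_mem_range.2 fun i x => ?_) hj
    exact χ_range _ ⟨Pi.single i x, by simp [μ_apply, Pi.single_apply]⟩
  obtain ⟨l, hl⟩ := extend J (ofAnnihilates J χ χ_smul)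
  have r_eq_zero (i : ι) : (Submodule.Quotient.mk (r i) : A ⧸ J) = 0 :=
    (Submodule.Quotient.mk_eq_zero J).2 (Submodule.subset_span ⟨i, rfl⟩)
  apply hχk
  calc χ k = ofAnnihilates J χ χ_smul k (Submodule.Quotient.mk 1) := by
        rw [ofAnnihilates_mk, one_smul]
    _ = l (∑ i, r i • p i) (Submodule.Quotient.mk 1) := by rw [hk, ← hl]; rfl
    _ = ∑ i, l (p i) (Submodule.Quotient.mk (r i)) := by
        simp [sum_apply, smul_apply, ← Submodule.Quotient.mk_smul]
    _ = 0 := by simp only [r_eq_zero, map_zero, Finset.sum_const_zero]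

end CharDual

end CharDual

section Flat

theorem exists_dual_basis_finset {A P : Type*} [Ring A] [AddCommGroup P] [Module A P]
    [Module.Projective A P] (s : Finset P) :
    ∃ (t : Finset P) (φ : t → P →ₗ[A] A), ∀ x ∈ s, ∑ e, φ e x • (e : P) = x := by
  classical
  obtain ⟨σ, hσ⟩ := Module.Projective.out (R := A) (P := P)
  refine ⟨s.biUnion fun x => (σ x).support, fun e => Finsupp.lapply (e : P) ∘ₗ σ, fun x hx => ?_⟩
  calc _ = ∑ e ∈ s.biUnion fun x => (σ x).support, σ x e • e :=
        Finset.sum_coe_sort _ fun e => σ x e • e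
    _ = Finsupp.linearCombination A id (σ x) :=
        (Finsupp.sum_of_support_subset _ (Finset.subset_biUnion_of_mem (fun x => (σ x).support) hx)
          (fun e a => a • e) fun e _ => zero_smul A e).symm
    _ = x := hσ x

variable {R}

theorem IsFlatMod.of_projective (P : Type) [AddCommGroup P] [Module R P] [Module.Projective R P] :
    IsFlatMod R P := by
  classical
  intro ι _ r x hx
  obtain ⟨t, φ, hφ⟩ := exists_dual_basis_finset (A := R) (Finset.univ.image x)
  refine ⟨t, inferInstance, fun i e => φ e (x i), Subtype.val,
    fun i => (hφ _ (Finset.mem_image_of_mem x (Finset.mem_univ i))).symm, fun e => ?_⟩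
  rw [← map_zero (φ e), ← hx, map_sum]
  simp only [map_smul, smul_eq_mul]

variable {K P M : Type} [AddCommGroup K] [Module R K] [AddCommGroup P] [Module R P]
  [AddCommGroup M] [Module R M] {f : K →ₗ[R] P} {g : P →ₗ[R] M}

theorem IsFlatMod.right_of_exact_of_pure (hP : IsFlatMod R P) (hfg : Function.Exact f g)
    (hg : Function.Surjective g)
    (hpure : ∀ (ι : Type) [Fintype ι] (r : ι → R) (p : ι → P) (k : K), ∑ i, r i • p i = f k →
      ∃ k' : ι → K, ∑ i, r i • k' i = k) : IsFlatMod R M := by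
  intro ι _ r x hx
  choose p hp using fun i => hg (x i)
  obtain ⟨k, hk⟩ := (hfg (∑ i, r i • p i)).1 (by simp [hp, hx])
  obtain ⟨k', rfl⟩ := hpure ι r p k hk.symm
  obtain ⟨κ, _, a, y, hy, ha⟩ := hP ι inferInstance r (fun i => p i - f (k' i)) (by
    simp [smul_sub, ← hk])
  refine ⟨κ, inferInstance, a, fun j => g (y j), fun i => ?_, ha⟩
  calc x i = g (p i - f (k' i)) := by rw [map_sub, hp, hfg.apply_apply_eq_zero, sub_zero]
    _ = ∑ j, a i j • g (y j) := by rw [hy, map_sum]; simp only [map_smul]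

variable [Module.Projective R P]

theorem IsFlatMod.exists_retraction_at (hM : IsFlatMod R M) (hf : Function.Injective f)
    (hfg : Function.Exact f g) (hg : Function.Surjective g) (k : K) :
    ∃ θ : P →ₗ[R] K, θ (f k) = k := by
  obtain ⟨t, φ, hφ⟩ := exists_dual_basis_finset (A := R) {f k}
  replace hφ := hφ _ (Finset.mem_singleton_self _)
  obtain ⟨κ, _, a, y, hy, ha⟩ := hM t inferInstance (fun e => φ e (f k)) (fun e => g e) (by
    simp only [← map_smul, ← map_sum, hφ, hfg.apply_apply_eq_zero])
  choose q hq using fun j => hg (y j)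
  choose w hw using fun e : t => (hfg (e - ∑ j, a e j • q j)).1 (by simp [hq, hy])
  refine ⟨∑ e, (φ e).smulRight (w e), hf ?_⟩
  calc f ((∑ e, (φ e).smulRight (w e)) (f k))
      = ∑ e, φ e (f k) • ((e : P) - ∑ j, a e j • q j) := by simp [hw]
    _ = f k - ∑ j, (∑ e, φ e (f k) * a e j) • q j := by
        simp only [smul_sub, Finset.sum_sub_distrib, hφ, Finset.smul_sum, Finset.sum_smul, mul_smul]
        rw [Finset.sum_comm]
    _ = f k := by simp only [ha, zero_smul, Finset.sum_const_zero, sub_zero]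

theorem IsFlatMod.exists_retraction_on_finset (hM : IsFlatMod R M) (hf : Function.Injective f)
    (hfg : Function.Exact f g) (hg : Function.Surjective g) (s : Finset K) :
    ∃ θ : P →ₗ[R] K, ∀ k ∈ s, θ (f k) = k := by
  classical
  induction s using Finset.induction_on with
  | empty => exact ⟨0, by simp⟩
  | insert k s _ ih =>
    obtain ⟨θ, hθ⟩ := ih
    obtain ⟨η, hη⟩ := hM.exists_retraction_at hf hfg hg (k - θ (f k))
    -- The new map `θ'` is chosen so that `1 - f θ' = (1 - f η) (1 - f θ)`.
    refine ⟨θ + η ∘ₗ (LinearMap.id - f ∘ₗ θ), fun x hx => ?_⟩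
    obtain rfl | hx := Finset.mem_insert.1 hx
    · simp [← map_sub, hη]
    · simp [hθ x hx]

theorem IsFlatMod.left_of_exact (hM : IsFlatMod R M) (hf : Function.Injective f)
    (hfg : Function.Exact f g) (hg : Function.Surjective g) : IsFlatMod R K := by
  classical
  intro ι _ r x hx
  obtain ⟨θ, hθ⟩ := hM.exists_retraction_on_finset hf hfg hg (Finset.univ.image x)
  obtain ⟨κ, _, a, y, hy, ha⟩ := IsFlatMod.of_projective P ι inferInstance r (fun i => f (x i)) (by
    simp only [← map_smul, ← map_sum, hx, map_zero])
  refine ⟨κ, inferInstance, a, fun j => θ (y j), fun i => ?_, ha⟩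
  rw [← hθ (x i) (Finset.mem_image_of_mem x (Finset.mem_univ i)), hy, map_sum]
  simp only [map_smul]

theorem isFlatMod_iff_exists_extension_charDual (hf : Function.Injective f)
    (hfg : Function.Exact f g) (hg : Function.Surjective g) :
    IsFlatMod R M ↔ ∀ (N : Type) [AddCommGroup N] [Module Rᵐᵒᵖ N] (h : K →ₗ[R] CharDual N),
      ∃ l : P →ₗ[R] CharDual N, l ∘ₗ f = h := by
  refine ⟨fun hM N _ _ h => ?_, fun extend => ?_⟩
  · refine CharDual.exists_extension_of_forall_finset f h fun s => ?_
    obtain ⟨θ, hθ⟩ := hM.exists_retraction_on_finset hf hfg hg s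
    exact ⟨h ∘ₗ θ, fun k hk => congrArg h (hθ k hk)⟩
  · exact (IsFlatMod.of_projective P).right_of_exact_of_pure hfg hg fun _ _ =>
      CharDual.exists_sum_smul_eq_of_forall_exists_extension f fun J => extend (R ⧸ J)

end Flat

section FlatDimension

open ShortComplex.ShortExact (moduleCat_exact_iff_function_exact)

variable {R}

theorem isFlatMod_iff_subsingleton_ext_charDual (M : ModuleCat.{0} R) :
    IsFlatMod R M ↔ ∀ (N : Type) [AddCommGroup N] [Module Rᵐᵒᵖ N],
      Subsingleton (Abelian.Ext M (ModuleCat.of R (CharDual N)) 1) := by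
  have hS := M.shortExact_projectiveShortComplex
  rw [isFlatMod_iff_exists_extension_charDual hS.moduleCat_injective_f
    ((moduleCat_exact_iff_function_exact _).1 hS.exact)
    hS.moduleCat_surjective_g]
  refine forall_congr' fun N => forall_congr' fun _ => forall_congr' fun _ => ?_
  rw [subsingleton_ext_one_iff_exists_extension hS]
  exact ⟨fun extend h => (extend h.hom).imp' ModuleCat.ofHom fun _ hl => ModuleCat.hom_ext hl,
    fun extend h => (extend (ModuleCat.ofHom h)).imp' ModuleCat.Hom.hom fun _ hl =>
      congrArg ModuleCat.Hom.hom hl⟩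

theorem IsFlatMod.subsingleton_ext_charDual {M : ModuleCat.{0} R} (hM : IsFlatMod R M)
    (N : Type) [AddCommGroup N] [Module Rᵐᵒᵖ N] (n : ℕ) :
    Subsingleton (Abelian.Ext M (ModuleCat.of R (CharDual N)) (n + 1)) := by
  induction n generalizing M with
  | zero => exact (isFlatMod_iff_subsingleton_ext_charDual M).1 hM N
  | succ n ih =>
    have hS := M.shortExact_projectiveShortComplex
    exact (subsingleton_ext_X₁_iff_of_projective hS _ n).1 <| ih <|
      hM.left_of_exact hS.moduleCat_injective_f
        ((moduleCat_exact_iff_function_exact _).1 hS.exact)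
        hS.moduleCat_surjective_g

theorem fdLE_iff_subsingleton_ext_charDual (n : ℕ) (M : ModuleCat.{0} R) :
    fdLE R n M ↔ ∀ (N : Type) [AddCommGroup N] [Module Rᵐᵒᵖ N],
      Subsingleton (Abelian.Ext M (ModuleCat.of R (CharDual N)) (n + 1)) := by
  induction n generalizing M with
  | zero => exact isFlatMod_iff_subsingleton_ext_charDual M
  | succ n ih =>
    constructor
    · rintro ⟨K, F, f, g, hF, hf, hg, hfg, hK⟩ N _ _
      let S := ShortComplex.mk f g (by ext x; exact hfg.apply_apply_eq_zero x)
      have hS : S.ShortExact := ModuleCat.shortComplex_shortExact S hfg hf hg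
      have : Subsingleton (Abelian.Ext S.X₁ _ _) := (ih K).1 hK N
      have : Subsingleton (Abelian.Ext S.X₂ _ _) := hF.subsingleton_ext_charDual N (n + 1)
      exact subsingleton_ext_X₃_of_X₁_of_X₂ hS _ (n + 1)
    · intro hM
      have hS := M.shortExact_projectiveShortComplex
      exact ⟨_, _, _, _, IsFlatMod.of_projective _, hS.moduleCat_injective_f,
        hS.moduleCat_surjective_g,
        (moduleCat_exact_iff_function_exact _).1 hS.exact,
        (ih _).2 fun N _ _ => (subsingleton_ext_X₁_iff_of_projective hS _ n).2 (hM N)⟩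

theorem fdLE_X₁_iff_of_projective {S : ShortComplex (ModuleCat.{0} R)} (hS : S.ShortExact)
    [Projective S.X₂] (n : ℕ) : fdLE R n S.X₁ ↔ fdLE R (n + 1) S.X₃ := by
  simp only [fdLE_iff_subsingleton_ext_charDual, subsingleton_ext_X₁_iff_of_projective hS]

theorem LnInj.subsingleton_ext {m : ℕ} {W : ModuleCat.{0} R} (hW : LnInj R m W) (n : ℕ)
    {M : ModuleCat.{0} R} (hM : fdLE R (m + n) M) : Subsingleton (Abelian.Ext M W (n + 1)) := by
  induction n generalizing M with
  | zero => exact (subsingleton_ext_succ_iff ℤ M W 0).1 (hW M hM)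
  | succ n ih =>
    have hS := M.shortExact_projectiveShortComplex
    exact (subsingleton_ext_X₁_iff_of_projective hS W n).1
      (ih ((fdLE_X₁_iff_of_projective hS (m + n)).2 hM))

theorem lnInj_X₃_iff_of_injective {S : ShortComplex (ModuleCat.{0} R)} (hS : S.ShortExact)
    [Injective S.X₂] (m : ℕ) :
    LnInj R m S.X₃ ↔ ∀ M, fdLE R m M → Subsingleton (Abelian.Ext M S.X₁ 2) := by
  refine forall_congr' fun M => imp_congr_right fun _ => ?_
  exact (subsingleton_ext_succ_iff ℤ M S.X₃ 0).trans (subsingleton_ext_X₃_iff_of_injective hS M 0)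

end FlatDimension

/-- For `n ≥ 1`, `fd_R M ≤ n` iff `Ext^n_R(M, W) = 0` for every weak-injective
(`L_1`-injective) module `W`. -/
theorem stmt10 (n : ℕ) (hn : 1 ≤ n) (M : ModuleCat.{0} R) :
    fdLE R n M ↔ ∀ W : ModuleCat.{0} R, LnInj R 1 W → extVanish R n M W := by
  obtain ⟨n, rfl⟩ := Nat.exists_eq_add_of_le' hn
  simp only [extVanish, subsingleton_ext_succ_iff]
  refine ⟨fun hM W hW => hW.subsingleton_ext n (add_comm n 1 ▸ hM), fun hExt => ?_⟩
  refine (fdLE_iff_subsingleton_ext_charDual (n + 1) M).2 fun N _ _ => ?_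
  have hS : (ShortComplex.mk _ _ (Limits.cokernel.condition
      (Injective.ι (ModuleCat.of R (CharDual N))))).ShortExact :=
    { exact := ShortComplex.exact_cokernel _ }
  have cosyzygy_lnInj := (lnInj_X₃_iff_of_injective hS 1).2 fun X hX =>
    (fdLE_iff_subsingleton_ext_charDual 1 X).1 hX N
  exact (subsingleton_ext_X₃_iff_of_injective hS M n).1 (hExt _ cosyzygy_lnInj)
end

section
/- Let n < m be nonnegative integers. If every L_n-injective R-module is L_m-injective, then every R-module of finite flat dimension has flat dimension at most n (i.e. l.FFD(R) ≤ n); conversely, if l.FFD(R) ≤ n then the classes of L_n-injective and L_m-injective modules coincide. -/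
open CategoryTheory

variable (R : Type) [Ring R]

/-!
The point is that flat dimension is detected by injectivity: `M` has flat dimension at most `n` if
and only if `Ext¹(M, W) = 0` for every `L_n`-injective `W`. For `n = 0` the test modules are the
character modules `(R ⧸ I)⋆` of cyclic right modules, since `Hom(-, (R ⧸ I)⋆)` is the dual of
`R ⧸ I ⊗ -`. For the inductive step, the quotient of an injective module by an `L_n`-injective
submodule `W` is `L_{n+1}`-injective, so vanishing of `Ext¹` on `L_{n+1}`-injective modules gives
`Ext²(M, W) = 0`, that is, `Ext¹(K, W) = 0` for the first syzygy `K` of `M`.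

Hence, if every `L_n`-injective module is `L_m`-injective with `n < m`, then flat dimension at most
`n + 1` forces flat dimension at most `n`, and a flat resolution of any finite length can be
shortened one step at a time.
-/

section Flat

variable {R : Type} [Ring R]

lemma IsFlatMod.of_free (M : Type) [AddCommGroup M] [Module R M] [Module.Free R M] :
    IsFlatMod R M := by
  classical
  intro ι _ r x hrx
  let b := Module.Free.chooseBasis R M
  let s : Finset (Module.Free.ChooseBasisIndex R M) :=
    Finset.univ.biUnion fun i ↦ (b.repr (x i)).support
  refine ⟨s, inferInstance, fun i j ↦ b.repr (x i) j.1, fun j ↦ b j.1, fun i ↦ ?_, fun j ↦ ?_⟩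
  · have hs : (b.repr (x i)).support ⊆ s :=
      Finset.subset_biUnion_of_mem (fun i ↦ (b.repr (x i)).support) (Finset.mem_univ i)
    rw [s.sum_coe_sort fun j ↦ b.repr (x i) j • b j]
    conv_lhs => rw [← b.linearCombination_repr (x i), Finsupp.linearCombination_apply]
    exact Finsupp.sum_of_support_subset _ hs _ fun _ _ ↦ zero_smul R _
  · simpa [Finsupp.finsetSum_apply] using DFunLike.congr_fun (congr_arg b.repr hrx) j.1

lemma IsFlatMod.exists_matrix_mul_eq_zero {M : Type} [AddCommGroup M] [Module R M]
    (hM : IsFlatMod R M) {ι : Type*} {κ : Type} [Finite ι] [Fintype κ] (a : Matrix ι κ R)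
    (x : κ → M) (hax : ∀ i, ∑ j, a i j • x j = 0) :
    ∃ (l : Type) (_ : Fintype l) (b : Matrix κ l R) (y : l → M),
      (∀ j, x j = ∑ p, b j p • y p) ∧ a * b = 0 := by
  classical
  have := Fintype.ofFinite ι
  suffices h : ∀ s : Finset ι, ∃ (l : Type) (_ : Fintype l) (b : Matrix κ l R) (y : l → M),
      (∀ j, x j = ∑ p, b j p • y p) ∧ ∀ i ∈ s, ∀ p, (a * b) i p = 0 by
    obtain ⟨l, _, b, y, hxy, hab⟩ := h Finset.univ
    exact ⟨l, inferInstance, b, y, hxy, Matrix.ext fun i ↦ hab i (Finset.mem_univ i)⟩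
  intro s
  induction s using Finset.induction_on with
  | empty => exact ⟨κ, inferInstance, 1, x, fun j ↦ by simp [Matrix.one_apply], by simp⟩
  | insert i s _ ih =>
    obtain ⟨l, _, b, y, hxy, hab⟩ := ih
    have hy : ∑ p, (a * b) i p • y p = 0 := by
      rw [← hax i]
      simp only [Matrix.mul_apply, Finset.sum_smul, hxy, Finset.smul_sum, smul_smul]
      exact Finset.sum_comm
    obtain ⟨q, _, c, z, hyz, hc⟩ := hM l inferInstance _ y hy
    refine ⟨q, inferInstance, b * Matrix.of c, z, fun j ↦ ?_, fun i' hi' p ↦ ?_⟩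
    · simp only [hxy j, Matrix.mul_apply, Finset.sum_smul, Matrix.of_apply, hyz, Finset.smul_sum,
        smul_smul]
      exact Finset.sum_comm
    · rw [← Matrix.mul_assoc, Matrix.mul_apply]
      obtain rfl | hi' := Finset.mem_insert.1 hi'
      · exact hc p
      · exact Finset.sum_eq_zero fun j _ ↦ by rw [hab i' hi', zero_mul]

section Exact

variable {K X M : Type} [AddCommGroup K] [Module R K] [AddCommGroup X] [Module R X]
  [AddCommGroup M] [Module R M] {f : K →ₗ[R] X} {g : X →ₗ[R] M}

-- This is the purity of a short exact sequence whose last term is flat.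
lemma IsFlatMod.exists_eq_sum_smul_of_exact (hM : IsFlatMod R M) (hf : Function.Injective f)
    (hg : Function.Surjective g) (hfg : Function.Exact f g) {ι : Type*} {κ : Type} [Finite ι]
    [Fintype κ] (a : Matrix ι κ R) (k : ι → K) (p : κ → X) (hkp : ∀ i, f (k i) = ∑ j, a i j • p j) :
    ∃ k' : κ → K, ∀ i, k i = ∑ j, a i j • k' j := by
  obtain ⟨l, _, b, y, hpy, hab⟩ := hM.exists_matrix_mul_eq_zero a (fun j ↦ g (p j)) fun i ↦ by
    simpa [hfg.apply_apply_eq_zero] using (congr_arg g (hkp i)).symm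
  choose z hz using fun q ↦ hg (y q)
  have hlift (j : κ) : ∃ k', f k' = p j - ∑ q, b j q • z q :=
    (hfg _).1 (by simp [hz, hpy j])
  choose k' hk' using hlift
  have habz (i : ι) : ∑ j, a i j • ∑ q, b j q • z q = 0 := by
    simp only [Finset.smul_sum, smul_smul]
    rw [Finset.sum_comm]
    refine Finset.sum_eq_zero fun q _ ↦ ?_
    rw [← Finset.sum_smul, ← Matrix.mul_apply, hab, Matrix.zero_apply, zero_smul]
  refine ⟨k', fun i ↦ hf ?_⟩
  simp only [map_sum, map_smul, hk', smul_sub, Finset.sum_sub_distrib, habz, sub_zero, hkp]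

lemma IsFlatMod.of_exact (hX : IsFlatMod R X) (hM : IsFlatMod R M) (hf : Function.Injective f)
    (hg : Function.Surjective g) (hfg : Function.Exact f g) : IsFlatMod R K := by
  intro ι _ r x hrx
  obtain ⟨κ, _, a, p, hxp, hra⟩ := hX ι inferInstance r (fun i ↦ f (x i)) (by
    simpa using congr_arg f hrx)
  obtain ⟨y, hxy⟩ := hM.exists_eq_sum_smul_of_exact hf hg hfg (Matrix.of a) x p hxp
  exact ⟨κ, inferInstance, a, y, hxy, hra⟩

end Exact

end Flat

section CyclicDual

variable {A : Type*} [Ring A] {ι : Type*}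

/-- The subgroup `I M` of a left module `M`, where `I = ∑ i, r i A` is the right ideal generated
by the family `r`. The quotient `M ⧸ I M` plays the role of the tensor product of `A ⧸ I` and `M`
over the noncommutative ring `A`. -/
def smulSpan (r : ι → A) (M : Type*) [AddCommGroup M] [Module A M] : Submodule ℤ M :=
  Submodule.span ℤ {x | ∃ i m, r i • m = x}

/-- The character group of the right module `A ⧸ ∑ i, r i A`, encoded as the group of characters
of `A` that vanish on the right ideal generated by the family `r`. It is a left `A`-module. -/
def cyclicDual (r : ι → A) : AddSubgroup (A →+ AddCircle (1 : ℚ)) where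
  carrier := {χ | ∀ i t, χ (r i * t) = 0}
  add_mem' hχ hψ i t := by simp [hχ i t, hψ i t]
  zero_mem' _ _ := rfl
  neg_mem' hχ i t := by simp [hχ i t]

section SMulSpan

variable {r : ι → A} {M N : Type*} [AddCommGroup M] [Module A M] [AddCommGroup N] [Module A N]

lemma smul_mem_smulSpan (i : ι) (m : M) : r i • m ∈ smulSpan r M :=
  Submodule.subset_span ⟨i, m, rfl⟩

lemma smulSpan_le_iff {P : Submodule ℤ M} : smulSpan r M ≤ P ↔ ∀ i (m : M), r i • m ∈ P := by
  rw [smulSpan, Submodule.span_le]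
  exact ⟨fun h i m ↦ h ⟨i, m, rfl⟩, by rintro h _ ⟨i, m, rfl⟩; exact h i m⟩

lemma mem_smulSpan_iff_exists_sum [Fintype ι] {x : M} :
    x ∈ smulSpan r M ↔ ∃ m : ι → M, x = ∑ i, r i • m i := by
  classical
  refine ⟨fun hx ↦ ?_, ?_⟩
  · induction hx using Submodule.span_induction with
    | mem x hx =>
      obtain ⟨i, m, rfl⟩ := hx
      exact ⟨Pi.single i m, by simp [Pi.single_apply]⟩
    | zero => exact ⟨0, by simp⟩
    | add x y _ _ hx hy =>
      obtain ⟨⟨m, rfl⟩, ⟨n, rfl⟩⟩ := And.intro hx hy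
      exact ⟨m + n, by simp [Finset.sum_add_distrib]⟩
    | smul c x _ hx =>
      obtain ⟨m, rfl⟩ := hx
      exact ⟨c • m, by simp [Finset.smul_sum, smul_comm c]⟩
  · rintro ⟨m, rfl⟩
    exact sum_mem fun i _ ↦ smul_mem_smulSpan i (m i)

lemma smulSpan_le_comap (f : M →ₗ[A] N) :
    smulSpan r M ≤ (smulSpan r N).comap (f.restrictScalars ℤ) :=
  smulSpan_le_iff.2 fun i m ↦ by simpa using smul_mem_smulSpan i (f m)

variable (r) in
/-- The map `M ⧸ I M → N ⧸ I N` induced by a linear map `M → N`, where `I = ∑ i, r i A`. -/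
def smulSpanQuotientMap (f : M →ₗ[A] N) : M ⧸ smulSpan r M →ₗ[ℤ] N ⧸ smulSpan r N :=
  Submodule.mapQ _ _ (f.restrictScalars ℤ) (smulSpan_le_comap f)

lemma smulSpanQuotientMap_injective_iff {f : M →ₗ[A] N} :
    Function.Injective (smulSpanQuotientMap r f) ↔
      (smulSpan r N).comap (f.restrictScalars ℤ) ≤ smulSpan r M := by
  rw [← LinearMap.ker_eq_bot, smulSpanQuotientMap, Submodule.ker_mapQ,
    ← LinearMap.le_ker_iff_map, Submodule.ker_mkQ]

end SMulSpan

namespace cyclicDual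

variable {r : ι → A}

@[ext]
lemma ext {χ ψ : cyclicDual r} (h : ∀ t, χ.1 t = ψ.1 t) : χ = ψ :=
  Subtype.ext (AddMonoidHom.ext h)

instance : SMul A (cyclicDual r) where
  smul s χ := ⟨χ.1.comp (AddMonoidHom.mulRight s), fun i t ↦ by
    simpa [mul_assoc] using χ.2 i (t * s)⟩

lemma smul_apply (s t : A) (χ : cyclicDual r) : (s • χ).1 t = χ.1 (t * s) := rfl

instance : Module A (cyclicDual r) where
  one_smul χ := ext fun t ↦ by simp [smul_apply]
  mul_smul s s' χ := ext fun t ↦ by simp [smul_apply, mul_assoc]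
  smul_zero s := ext fun t ↦ rfl
  smul_add s χ ψ := ext fun t ↦ rfl
  add_smul s s' χ := ext fun t ↦ by simp [smul_apply, mul_add]
  zero_smul χ := ext fun t ↦ by simp [smul_apply]

variable {M N : Type*} [AddCommGroup M] [Module A M] [AddCommGroup N] [Module A N]

lemma linearMap_apply_apply (φ : M →ₗ[A] cyclicDual r) (m : M) (t : A) :
    (φ m).1 t = (φ (t • m)).1 1 := by
  rw [map_smul, smul_apply, one_mul]

/-- The adjunction `Hom_A(M, (A ⧸ I)⋆) ≃ (M ⧸ I M)⋆` for the right ideal `I = ∑ i, r i A`. -/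
def homEquiv : (M →ₗ[A] cyclicDual r) ≃ CharacterModule (M ⧸ smulSpan r M) where
  toFun φ := ((smulSpan r M).liftQ
    (AddMonoidHom.toIntLinearMap
      { toFun m := (φ m).1 1
        map_zero' := by simp
        map_add' := by simp })
    (smulSpan_le_iff.2 fun i m ↦ by
      have h := (φ m).2 i 1
      rwa [mul_one, linearMap_apply_apply] at h)).toAddMonoidHom
  invFun χ :=
    let χ' : M →+ AddCircle (1 : ℚ) := AddMonoidHom.comp χ (smulSpan r M).mkQ.toAddMonoidHom
    have hχ' (i : ι) (m : M) : χ' (r i • m) = 0 :=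
      (congr_arg χ ((Submodule.Quotient.mk_eq_zero _).2 (smul_mem_smulSpan i m))).trans (map_zero χ)
    { toFun m := ⟨χ'.comp ((smulAddHom A M).flip m), fun i t ↦ by
        simpa [mul_smul] using hχ' i (t • m)⟩
      map_add' m n := ext fun t ↦ by simp
      map_smul' s m := ext fun t ↦ by simp [smul_apply, mul_smul] }
  left_inv φ := LinearMap.ext fun m ↦ ext fun t ↦ (linearMap_apply_apply φ m t).symm
  right_inv χ := AddMonoidHom.ext fun x ↦ by
    obtain ⟨m, rfl⟩ := (smulSpan r M).mkQ_surjective x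
    exact congr_arg (fun m ↦ χ ((smulSpan r M).mkQ m)) (one_smul A m)

lemma homEquiv_comp (f : M →ₗ[A] N) (φ : N →ₗ[A] cyclicDual r) :
    homEquiv (φ ∘ₗ f) = CharacterModule.dual (smulSpanQuotientMap r f) (homEquiv φ) := by
  refine AddMonoidHom.ext fun x ↦ ?_
  obtain ⟨m, rfl⟩ := (smulSpan r M).mkQ_surjective x
  rfl

lemma comp_surjective_iff {f : M →ₗ[A] N} :
    Function.Surjective (fun φ : N →ₗ[A] cyclicDual r ↦ φ ∘ₗ f) ↔
      (smulSpan r N).comap (f.restrictScalars ℤ) ≤ smulSpan r M := by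
  have hdual : homEquiv ∘ (fun φ : N →ₗ[A] cyclicDual r ↦ φ ∘ₗ f) =
      CharacterModule.dual (smulSpanQuotientMap r f) ∘ homEquiv :=
    funext (homEquiv_comp f)
  rw [← smulSpanQuotientMap_injective_iff, ← CharacterModule.dual_surjective_iff_injective,
    ← EquivLike.comp_surjective _ homEquiv, hdual, EquivLike.surjective_comp]

end cyclicDual

-- The condition says that `Tor₁(R ⧸ I, M) = 0` for every finitely generated right ideal `I`.
lemma isFlatMod_iff_comap_smulSpan_le {R : Type} [Ring R] {K X M : Type} [AddCommGroup K]
    [Module R K] [AddCommGroup X] [Module R X] [AddCommGroup M] [Module R M] {f : K →ₗ[R] X}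
    {g : X →ₗ[R] M} (hX : IsFlatMod R X) (hf : Function.Injective f) (hg : Function.Surjective g)
    (hfg : Function.Exact f g) :
    IsFlatMod R M ↔ ∀ (ι : Type) [Fintype ι] (r : ι → R),
      (smulSpan r X).comap (f.restrictScalars ℤ) ≤ smulSpan r K := by
  constructor
  · intro hM ι _ r k hk
    obtain ⟨p, hp⟩ := mem_smulSpan_iff_exists_sum.1 hk
    obtain ⟨k', hk'⟩ := hM.exists_eq_sum_smul_of_exact hf hg hfg (Matrix.of fun _ : Unit ↦ r)
      (fun _ ↦ k) p fun _ ↦ hp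
    exact mem_smulSpan_iff_exists_sum.2 ⟨k', hk' ()⟩
  · intro h ι _ r x hrx
    choose p hp using fun i ↦ hg (x i)
    obtain ⟨k, hk⟩ := (hfg (∑ i, r i • p i)).1 (by simp [hp, hrx])
    obtain ⟨k', rfl⟩ := mem_smulSpan_iff_exists_sum.1
      (h ι r (mem_smulSpan_iff_exists_sum.2 ⟨p, hk⟩ : f k ∈ smulSpan r X))
    have hrel : ∑ i, r i • (p i - f (k' i)) = 0 := by
      simp [smul_sub, Finset.sum_sub_distrib, ← hk]
    obtain ⟨κ, _, a, y, hpy, hra⟩ := hX ι inferInstance r _ hrel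
    refine ⟨κ, inferInstance, a, fun j ↦ g (y j), fun i ↦ ?_, hra⟩
    simpa [hp, hfg.apply_apply_eq_zero] using congr_arg g (hpy i)

end CyclicDual

section Ext

variable {C : Type*} [Category* C] [Abelian C] [HasExt C]

lemma subsingleton_leftDerivedExt_succ_iff (A : Type*) [Ring A] [Linear A C] [EnoughProjectives C]
    (X Y : C) (n : ℕ) :
    Subsingleton (((Ext A C (n + 1)).obj (Opposite.op X)).obj Y) ↔
      Subsingleton (Abelian.Ext X Y (n + 1)) := by
  let P := projectiveResolution X
  have cocycles_are_coboundaries : Subsingleton (((Ext A C (n + 1)).obj (Opposite.op X)).obj Y) ↔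
      ∀ φ : P.complex.X (n + 1) ⟶ Y, P.complex.d (n + 2) (n + 1) ≫ φ = 0 →
        ∃ ψ : P.complex.X n ⟶ Y, P.complex.d (n + 1) n ≫ ψ = φ := by
    rw [← ModuleCat.isZero_iff_subsingleton, (P.isoExt (n + 1) Y).isZero_iff,
      ← HomologicalComplex.exactAt_iff_isZero_homology,
      HomologicalComplex.exactAt_iff' _ n (n + 1) (n + 2) (by simp) (by simp),
      ShortComplex.moduleCat_exact_iff]
    rfl
  rw [cocycles_are_coboundaries]
  constructor
  · refine fun h ↦ subsingleton_of_forall_eq 0 fun x ↦ ?_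
    obtain ⟨φ, hφ, rfl⟩ := P.extMk_surjective x (n + 2) rfl
    exact (P.extMk_eq_zero_iff φ (n + 2) rfl hφ n rfl).2 (h φ hφ)
  · exact fun _ φ hφ ↦ (P.extMk_eq_zero_iff φ (n + 2) rfl hφ n rfl).1 (Subsingleton.elim _ _)

variable {S : ShortComplex C}

lemma subsingleton_ext_one_iff_precomp_surjective (hS : S.ShortExact) [Projective S.X₂] (W : C) :
    Subsingleton (Abelian.Ext S.X₃ W 1) ↔ Function.Surjective fun ψ : S.X₂ ⟶ W ↦ S.f ≫ ψ := by
  constructor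
  · intro _ φ
    obtain ⟨y, hy⟩ := Abelian.Ext.contravariant_sequence_exact₁ hS W (Abelian.Ext.mk₀ φ)
      (n₁ := 1) rfl (Subsingleton.elim _ _)
    obtain ⟨ψ, rfl⟩ := Abelian.Ext.homEquiv₀.symm.surjective y
    exact ⟨ψ, (Abelian.Ext.mk₀_bijective _ _).injective (by simpa using hy)⟩
  · refine fun h ↦ subsingleton_of_forall_eq 0 fun x ↦ ?_
    obtain ⟨y, rfl⟩ := Abelian.Ext.contravariant_sequence_exact₃ hS W x
      (Abelian.Ext.eq_zero_of_projective _) (n₀ := 0) rfl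
    obtain ⟨φ, rfl⟩ := Abelian.Ext.homEquiv₀.symm.surjective y
    obtain ⟨ψ, rfl⟩ := h φ
    simp [← Abelian.Ext.mk₀_comp_mk₀]

lemma subsingleton_ext_X₃_left (hS : S.ShortExact) {W : C} {n : ℕ}
    (h₁ : Subsingleton (Abelian.Ext S.X₁ W n)) (h₂ : Subsingleton (Abelian.Ext S.X₂ W (n + 1))) :
    Subsingleton (Abelian.Ext S.X₃ W (n + 1)) := by
  refine subsingleton_of_forall_eq 0 fun x ↦ ?_
  obtain ⟨y, rfl⟩ := Abelian.Ext.contravariant_sequence_exact₃ hS W x (Subsingleton.elim _ _)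
    (Nat.add_comm 1 n)
  rw [Subsingleton.elim y 0, Abelian.Ext.comp_zero]

lemma subsingleton_ext_X₁_left (hS : S.ShortExact) {W : C} {n : ℕ}
    (h₂ : Subsingleton (Abelian.Ext S.X₂ W n)) (h₃ : Subsingleton (Abelian.Ext S.X₃ W (n + 1))) :
    Subsingleton (Abelian.Ext S.X₁ W n) := by
  refine subsingleton_of_forall_eq 0 fun x ↦ ?_
  obtain ⟨y, rfl⟩ := Abelian.Ext.contravariant_sequence_exact₁ hS W x
    (Nat.add_comm 1 n) (Subsingleton.elim _ _)
  rw [Subsingleton.elim y 0, Abelian.Ext.comp_zero]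

lemma subsingleton_ext_X₁_right (hS : S.ShortExact) {X : C} {n : ℕ}
    (h₃ : Subsingleton (Abelian.Ext X S.X₃ n)) (h₂ : Subsingleton (Abelian.Ext X S.X₂ (n + 1))) :
    Subsingleton (Abelian.Ext X S.X₁ (n + 1)) := by
  refine subsingleton_of_forall_eq 0 fun x ↦ ?_
  obtain ⟨y, rfl⟩ := Abelian.Ext.covariant_sequence_exact₁ X hS x (Subsingleton.elim _ _)
    (n₀ := n) rfl
  rw [Subsingleton.elim y 0, Abelian.Ext.zero_comp]

lemma subsingleton_ext_X₃_right (hS : S.ShortExact) {X : C} {n : ℕ}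
    (h₂ : Subsingleton (Abelian.Ext X S.X₂ n)) (h₁ : Subsingleton (Abelian.Ext X S.X₁ (n + 1))) :
    Subsingleton (Abelian.Ext X S.X₃ n) := by
  refine subsingleton_of_forall_eq 0 fun x ↦ ?_
  obtain ⟨y, rfl⟩ := Abelian.Ext.covariant_sequence_exact₃ X hS x rfl (Subsingleton.elim _ _)
  rw [Subsingleton.elim y 0, Abelian.Ext.zero_comp]

end Ext

section FlatDimension

variable {R : Type} [Ring R] {n m : ℕ}

instance projective_projectiveShortComplex_X₂ {A : Type*} [Ring A] (M : ModuleCat A) :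
    Projective M.projectiveShortComplex.X₂ :=
  ModuleCat.projective_of_free (Module.Free.chooseBasis A M.projectiveShortComplex.X₂)

lemma isFlatMod_projectiveShortComplex_X₂ (M : ModuleCat.{0} R) :
    IsFlatMod R M.projectiveShortComplex.X₂ :=
  .of_free _

lemma IsFlatMod.projectiveShortComplex_X₁ {M : ModuleCat.{0} R} (hM : IsFlatMod R M) :
    IsFlatMod R M.projectiveShortComplex.X₁ :=
  have hS := M.shortExact_projectiveShortComplex
  .of_exact (f := M.projectiveShortComplex.f.hom) (g := M.projectiveShortComplex.g.hom)
    (isFlatMod_projectiveShortComplex_X₂ M) hM hS.moduleCat_injective_f hS.moduleCat_surjective_g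
    ((ShortComplex.ShortExact.moduleCat_exact_iff_function_exact _).1 hS.exact)

lemma isFlatMod_iff_subsingleton_ext_cyclicDual {M : ModuleCat.{0} R} :
    IsFlatMod R M ↔ ∀ (ι : Type) [Fintype ι] (r : ι → R),
      Subsingleton (Abelian.Ext M (ModuleCat.of R (cyclicDual r)) 1) := by
  have hS := M.shortExact_projectiveShortComplex
  rw [isFlatMod_iff_comap_smulSpan_le (f := M.projectiveShortComplex.f.hom)
    (g := M.projectiveShortComplex.g.hom) (isFlatMod_projectiveShortComplex_X₂ M)
    hS.moduleCat_injective_f hS.moduleCat_surjective_g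
    ((ShortComplex.ShortExact.moduleCat_exact_iff_function_exact _).1 hS.exact)]
  refine forall₃_congr fun ι _ r ↦ ?_
  have hcomp : ModuleCat.homEquiv ∘
        (fun ψ : _ ⟶ ModuleCat.of R (cyclicDual r) ↦ M.projectiveShortComplex.f ≫ ψ) =
      (fun φ : _ →ₗ[R] cyclicDual r ↦ φ ∘ₗ M.projectiveShortComplex.f.hom) ∘
        ModuleCat.homEquiv := rfl
  rw [← cyclicDual.comp_surjective_iff, subsingleton_ext_one_iff_precomp_surjective hS,
    ← EquivLike.comp_surjective _ ModuleCat.homEquiv, hcomp, EquivLike.surjective_comp]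

lemma fdLE_succ_iff {M : ModuleCat.{0} R} :
    fdLE R (n + 1) M ↔ ∃ (K F : ModuleCat.{0} R) (f : K ⟶ F) (g : F ⟶ M) (w : f ≫ g = 0),
      (ShortComplex.mk f g w).ShortExact ∧ IsFlatMod R F ∧ fdLE R n K := by
  constructor
  · rintro ⟨K, F, f, g, hF, hf, hg, hfg, hK⟩
    have w : f ≫ g = 0 := by ext x; exact hfg.apply_apply_eq_zero x
    exact ⟨K, F, f, g, w, ModuleCat.shortComplex_shortExact _ hfg hf hg, hF, hK⟩
  · rintro ⟨K, F, f, g, w, hS, hF, hK⟩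
    exact ⟨K, F, f, g, hF, hS.moduleCat_injective_f, hS.moduleCat_surjective_g,
      (ShortComplex.ShortExact.moduleCat_exact_iff_function_exact _).1 hS.exact, hK⟩

lemma fdLE.of_projectiveShortComplex_X₁ {M : ModuleCat.{0} R}
    (h : fdLE R n M.projectiveShortComplex.X₁) : fdLE R (n + 1) M :=
  fdLE_succ_iff.2 ⟨_, _, _, _, _, M.shortExact_projectiveShortComplex,
    isFlatMod_projectiveShortComplex_X₂ M, h⟩

lemma fdLE.succ {M : ModuleCat.{0} R} (h : fdLE R n M) : fdLE R (n + 1) M := by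
  induction n generalizing M with
  | zero => exact .of_projectiveShortComplex_X₁ (IsFlatMod.projectiveShortComplex_X₁ h)
  | succ n ih =>
    obtain ⟨K, F, f, g, w, hS, hF, hK⟩ := fdLE_succ_iff.1 h
    exact fdLE_succ_iff.2 ⟨K, F, f, g, w, hS, hF, ih hK⟩

lemma fdLE.mono (hnm : n ≤ m) {M : ModuleCat.{0} R} (h : fdLE R n M) : fdLE R m M :=
  Nat.le_induction h (fun _ _ ↦ fdLE.succ) m hnm

lemma fdLE.of_forall_fdLE_succ (h : ∀ M : ModuleCat.{0} R, fdLE R (n + 1) M → fdLE R n M)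
    {M : ModuleCat.{0} R} (hM : fdLE R m M) : fdLE R n M := by
  induction m generalizing M with
  | zero => exact hM.mono n.zero_le
  | succ m ih =>
    obtain ⟨K, F, f, g, w, hS, hF, hK⟩ := fdLE_succ_iff.1 hM
    exact h M (fdLE_succ_iff.2 ⟨K, F, f, g, w, hS, hF, ih hK⟩)

end FlatDimension

section LnInj

variable {R : Type} [Ring R] {n : ℕ}

lemma lnInj_iff {W : ModuleCat.{0} R} :
    LnInj R n W ↔ ∀ M : ModuleCat.{0} R, fdLE R n M → Subsingleton (Abelian.Ext M W 1) :=
  forall₂_congr fun M _ ↦ subsingleton_leftDerivedExt_succ_iff ℤ M W 0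

lemma lnInj_zero_cyclicDual {ι : Type} [Finite ι] (r : ι → R) :
    LnInj R 0 (ModuleCat.of R (cyclicDual r)) := by
  cases nonempty_fintype ι
  exact lnInj_iff.2 fun _ hF ↦ isFlatMod_iff_subsingleton_ext_cyclicDual.1 hF ι r

lemma LnInj.subsingleton_ext_two_of_isFlatMod {W : ModuleCat.{0} R} (hW : LnInj R n W)
    {F : ModuleCat.{0} R} (hF : IsFlatMod R F) : Subsingleton (Abelian.Ext F W 2) :=
  have hK : fdLE R 0 F.projectiveShortComplex.X₁ := hF.projectiveShortComplex_X₁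
  subsingleton_ext_X₃_left F.shortExact_projectiveShortComplex
    (lnInj_iff.1 hW _ (hK.mono n.zero_le)) (Abelian.Ext.subsingleton_of_projective _ _ 1)

lemma LnInj.subsingleton_ext_two {W : ModuleCat.{0} R} (hW : LnInj R n W) {M : ModuleCat.{0} R}
    (hM : fdLE R (n + 1) M) : Subsingleton (Abelian.Ext M W 2) := by
  obtain ⟨K, F, f, g, w, hS, hF, hK⟩ := fdLE_succ_iff.1 hM
  exact subsingleton_ext_X₃_left hS (lnInj_iff.1 hW K hK)
    (hW.subsingleton_ext_two_of_isFlatMod hF)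

lemma LnInj.succ_of_shortExact {S : ShortComplex (ModuleCat.{0} R)} (hS : S.ShortExact)
    [Injective S.X₂] (h : LnInj R n S.X₁) : LnInj R (n + 1) S.X₃ :=
  lnInj_iff.2 fun _ hX ↦ subsingleton_ext_X₃_right hS
    (Abelian.Ext.subsingleton_of_injective _ _ 0) (h.subsingleton_ext_two hX)

lemma fdLE_iff_forall_lnInj {M : ModuleCat.{0} R} :
    fdLE R n M ↔ ∀ W : ModuleCat.{0} R, LnInj R n W → Subsingleton (Abelian.Ext M W 1) := by
  refine ⟨fun hM W hW ↦ lnInj_iff.1 hW M hM, fun h ↦ ?_⟩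
  induction n generalizing M with
  | zero =>
    exact isFlatMod_iff_subsingleton_ext_cyclicDual.2 fun ι _ r ↦ h _ (lnInj_zero_cyclicDual r)
  | succ n ih =>
    refine .of_projectiveShortComplex_X₁ (ih fun W hW ↦ ?_)
    let I : InjectivePresentation W := Classical.arbitrary _
    have hI := I.shortExact_shortComplex
    have hM₂ : Subsingleton (Abelian.Ext M W 2) :=
      subsingleton_ext_X₁_right hI (h _ (LnInj.succ_of_shortExact hI hW))
        (Abelian.Ext.subsingleton_of_injective _ _ 1)
    exact subsingleton_ext_X₁_left M.shortExact_projectiveShortComplex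
      (Abelian.Ext.subsingleton_of_projective _ _ 0) hM₂

end LnInj

/-- For `n < m`: if every `L_n`-injective module is `L_m`-injective then `l.FFD(R) ≤ n`;
conversely, if `l.FFD(R) ≤ n` then the classes of `L_n`-injective and `L_m`-injective
modules coincide. -/
theorem stmt11 (n m : ℕ) (hnm : n < m) :
    ((∀ W : ModuleCat.{0} R, LnInj R n W → LnInj R m W) →
      ∀ M : ModuleCat.{0} R, (∃ k, fdLE R k M) → fdLE R n M) ∧
    ((∀ M : ModuleCat.{0} R, (∃ k, fdLE R k M) → fdLE R n M) →
      ∀ W : ModuleCat.{0} R, (LnInj R n W ↔ LnInj R m W)) := by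
  constructor
  · rintro h M ⟨k, hM⟩
    refine hM.of_forall_fdLE_succ fun X hX ↦ fdLE_iff_forall_lnInj.2 fun W hW ↦ ?_
    exact lnInj_iff.1 (h W hW) X (hX.mono hnm)
  · intro h W
    exact ⟨fun hW M hM ↦ hW M (h M ⟨m, hM⟩), fun hW M hM ↦ hW M (hM.mono hnm.le)⟩
end

section
/- Given a short exact sequence 0 → A → W → C → 0 of R-modules with W L_n-injective: if A is L_n-injective then C is L_n-injective; and if the L_n-injective dimension of A is positive and finite, then L_n-id(C) = L_n-id(A) − 1. -/
open CategoryTheory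

variable (R : Type) [Ring R]

/-- `N` has `L_n`-injective dimension at most `m`: there is an exact sequence
`0 → N → W_0 → ⋯ → W_m → 0` with all `W_i` `L_n`-injective. -/
def LnidLE (n : ℕ) : ℕ → ModuleCat.{0} R → Prop
  | 0, N => LnInj R n N
  | m+1, N => ∃ (W C : ModuleCat.{0} R) (f : N ⟶ W) (g : W ⟶ C),
      LnInj R n W ∧ Function.Injective f ∧ Function.Surjective g ∧
        Function.Exact f g ∧ LnidLE n m C

/-- The `L_n`-injective dimension of `N`, as an extended natural number. -/
noncomputable def Lnid (n : ℕ) (N : ModuleCat.{0} R) : ℕ∞ :=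
  sInf {k : ℕ∞ | ∃ m : ℕ, k = m ∧ LnidLE R n m N}

/-!
Over a flat module finitely many relations can be trivialized simultaneously, so the kernel of a
surjection between flat modules is again flat. Hence the modules of flat dimension at most `n` have
enough syzygies to push the vanishing of `Ext¹(-, W)` on them up to all degrees: `W` is
`L_n`-injective exactly when `Extⁱ(M, W) = 0` for all `i ≥ 1` and all `M` with `fd M ≤ n`.
By dimension shifting, `L_n-id N ≤ m` if and only if `Ext^{m+1}(M, N) = 0` for all such `M`. Along
`0 → A → W → C → 0` the connecting map is an isomorphism `Ext^{m+1}(M, C) ≅ Ext^{m+2}(M, A)`,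
so that `L_n-id A ≤ m + 1` if and only if `L_n-id C ≤ m`.
-/

section Ext

universe w v u

variable {C : Type u} [Category.{v} C] [Abelian C] [HasExt.{w} C]

lemma subsingleton_ext_X₃ {S : ShortComplex C} (hS : S.ShortExact) {Y : C} {i : ℕ}
    (h₁ : Subsingleton (Abelian.Ext.{w} S.X₁ Y i))
    (h₂ : Subsingleton (Abelian.Ext.{w} S.X₂ Y (i + 1))) :
    Subsingleton (Abelian.Ext.{w} S.X₃ Y (i + 1)) := by
  refine subsingleton_of_forall_eq 0 fun x => ?_
  obtain ⟨y, rfl⟩ :=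
    Abelian.Ext.contravariant_sequence_exact₃ hS Y x (Subsingleton.elim _ _) (add_comm 1 i)
  rw [Subsingleton.elim y 0, Abelian.Ext.comp_zero]

lemma subsingleton_ext_X₁_succ_iff {S : ShortComplex C} (hS : S.ShortExact) {X : C} {i : ℕ}
    (h : Subsingleton (Abelian.Ext.{w} X S.X₂ i))
    (h' : Subsingleton (Abelian.Ext.{w} X S.X₂ (i + 1))) :
    Subsingleton (Abelian.Ext.{w} X S.X₁ (i + 1)) ↔ Subsingleton (Abelian.Ext.{w} X S.X₃ i) := by
  constructor <;> intro _ <;> refine subsingleton_of_forall_eq 0 fun x => ?_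
  · obtain ⟨y, rfl⟩ := Abelian.Ext.covariant_sequence_exact₃ X hS x rfl (Subsingleton.elim _ _)
    rw [Subsingleton.elim y 0, Abelian.Ext.zero_comp]
  · obtain ⟨y, rfl⟩ := Abelian.Ext.covariant_sequence_exact₁ X hS x (Subsingleton.elim _ _) rfl
    rw [Subsingleton.elim y 0, Abelian.Ext.zero_comp]

-- The long exact sequences are available for `Abelian.Ext`, not for the derived functor `Ext`; both
-- are computed by the same projective resolution.
lemma isZero_ext_succ_iff_subsingleton {k : Type*} [Ring k] [Linear k C] [EnoughProjectives C]
    (X Y : C) (i : ℕ) :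
    Limits.IsZero (((Ext k C (i + 1)).obj (Opposite.op X)).obj Y) ↔
      Subsingleton (Abelian.Ext.{w} X Y (i + 1)) := by
  let P := projectiveResolution X
  have isZero_iff : Limits.IsZero (((Ext k C (i + 1)).obj (Opposite.op X)).obj Y) ↔
      ∀ f : P.complex.X (i + 1) ⟶ Y, P.complex.d (i + 2) (i + 1) ≫ f = 0 →
        ∃ g, P.complex.d (i + 1) i ≫ g = f := by
    rw [(P.isoExt (i + 1) Y).isZero_iff, ← HomologicalComplex.exactAt_iff_isZero_homology,
      HomologicalComplex.exactAt_iff' _ i (i + 1) (i + 2) (by simp) (by simp),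
      ShortComplex.moduleCat_exact_iff]
    rfl
  rw [isZero_iff]
  constructor
  · intro h
    refine subsingleton_of_forall_eq 0 fun α => ?_
    obtain ⟨f, hf, rfl⟩ := P.extMk_surjective α (i + 2) rfl
    exact (P.extMk_eq_zero_iff f (i + 2) rfl hf i rfl).mpr (h f hf)
  · intro _ f hf
    exact (P.extMk_eq_zero_iff f (i + 2) rfl hf i rfl).mp (Subsingleton.elim _ _)

end Ext

section Flat

variable {R}

lemma sum_smul_sum_smul {M ι κ : Type*} [AddCommGroup M] [Module R M] [Fintype ι] [Fintype κ]
    (r : ι → R) (a : ι → κ → R) (y : κ → M) :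
    ∑ i, r i • ∑ j, a i j • y j = ∑ j, (∑ i, r i * a i j) • y j := by
  simp_rw [Finset.sum_smul, Finset.smul_sum, mul_smul]
  exact Finset.sum_comm

namespace IsFlatMod

variable {M : Type} [AddCommGroup M] [Module R M]

lemma of_subsingleton [Subsingleton M] : IsFlatMod R M := fun _ _ _ _ _ =>
  ⟨Empty, inferInstance, fun _ => Empty.elim, Empty.elim, fun _ => Subsingleton.elim _ _, nofun⟩

lemma of_free_s16 [Module.Free R M] : IsFlatMod R M := by
  classical
  let v := Module.Free.chooseBasis R M
  intro ι _ r x hrx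
  let S := Finset.univ.biUnion fun i => (v.repr (x i)).support
  refine ⟨S, inferInstance, fun i s => v.repr (x i) s, fun s => v s, fun i => ?_, fun s => ?_⟩
  · have support_subset : (v.repr (x i)).support ⊆ S :=
      Finset.subset_biUnion_of_mem (fun i => (v.repr (x i)).support) (Finset.mem_univ i)
    conv_lhs => rw [← v.linearCombination_repr (x i), Finsupp.linearCombination_apply,
      Finsupp.sum_of_support_subset _ support_subset _ (by simp)]
    rw [← Finset.sum_coe_sort]
  · simpa [Finsupp.finsetSum_apply] using DFunLike.congr_fun (congrArg v.repr hrx) s.1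

lemma exists_of_forall_mem_sum_smul_eq_zero (hM : IsFlatMod R M) {ι ρ : Type} [Fintype ι]
    (r : ρ → ι → R) (x : ι → M) (s : Finset ρ) (hrx : ∀ k ∈ s, ∑ i, r k i • x i = 0) :
    ∃ (κ : Type) (_ : Fintype κ) (a : ι → κ → R) (y : κ → M),
      (∀ i, x i = ∑ j, a i j • y j) ∧ ∀ k ∈ s, ∀ j, ∑ i, r k i * a i j = 0 := by
  classical
  induction s using Finset.induction_on with
  | empty => exact ⟨ι, inferInstance, fun i j => if i = j then 1 else 0, x, by simp, by simp⟩
  | insert k s _ ih =>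
    obtain ⟨κ, _, a, y, hx, ha⟩ := ih fun k' hk' => hrx k' (Finset.mem_insert_of_mem hk')
    have relation_k : ∑ j, (∑ i, r k i * a i j) • y j = 0 := by
      simp_rw [← sum_smul_sum_smul, ← hx]
      exact hrx k (Finset.mem_insert_self k s)
    obtain ⟨μ, hμ, b, z, hy, hb⟩ := hM κ inferInstance _ y relation_k
    refine ⟨μ, hμ, fun i l => ∑ j, a i j * b j l, z, fun i => ?_, fun k' hk' l => ?_⟩
    · rw [← sum_smul_sum_smul, hx]
      simp_rw [← hy]
    · have assoc := sum_smul_sum_smul (r k') a fun j => b j l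
      simp_rw [smul_eq_mul] at assoc
      rw [assoc]
      rcases Finset.mem_insert.mp hk' with rfl | hk'
      · exact hb l
      · simp [ha k' hk']

lemma ker {P F : Type} [AddCommGroup P] [AddCommGroup F] [Module R P] [Module R F]
    (hP : IsFlatMod R P) (hF : IsFlatMod R F) {g : P →ₗ[R] F} (hg : Function.Surjective g) :
    IsFlatMod R (LinearMap.ker g) := by
  intro ι _ r x hrx
  obtain ⟨κ, _, a, p, hx, ha⟩ := hP ι inferInstance r (fun i => (x i : P))
    (by simpa using congrArg Subtype.val hrx)
  have relations_in_F : ∀ i, ∑ j, a i j • g (p j) = 0 := fun i => by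
    simp_rw [← map_smul, ← map_sum, ← hx, LinearMap.map_coe_ker]
  obtain ⟨μ, _, b, z, hz, hb⟩ := hF.exists_of_forall_mem_sum_smul_eq_zero a (fun j => g (p j))
    Finset.univ fun i _ => relations_in_F i
  choose q hq using fun l => hg (z l)
  -- The correction moving `p j` into the kernel is invisible to `a`, because `a * b = 0`.
  have correction : ∀ i, ∑ j, a i j • ∑ l, b j l • q l = 0 := fun i => by
    simp [sum_smul_sum_smul, hb]
  refine ⟨κ, inferInstance, a, fun j => ⟨p j - ∑ l, b j l • q l, ?_⟩, fun i => ?_, ha⟩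
  · simp [hz, hq]
  · ext
    simp [smul_sub, correction, hx]

lemma projectiveShortComplex_X₁_s16 {F : ModuleCat.{0} R} (hF : IsFlatMod R F) :
    IsFlatMod R F.projectiveShortComplex.X₁ :=
  ker of_free_s16 hF F.shortExact_projectiveShortComplex.moduleCat_surjective_g

end IsFlatMod

lemma fdLE_succ {n : ℕ} {M : ModuleCat.{0} R} (hM : fdLE R n M) : fdLE R (n + 1) M := by
  induction n generalizing M with
  | zero =>
    exact ⟨ModuleCat.of R PUnit, M, 0, 𝟙 M, hM, Function.injective_of_subsingleton _,
      Function.surjective_id, (LinearMap.exact_zero_iff_injective PUnit LinearMap.id).mpr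
        Function.injective_id, IsFlatMod.of_subsingleton⟩
  | succ n ih =>
    obtain ⟨K, F, f, g, hF, hf, hg, hfg, hK⟩ := hM
    exact ⟨K, F, f, g, hF, hf, hg, hfg, ih hK⟩

lemma monotone_fdLE (M : ModuleCat.{0} R) : Monotone fun n => fdLE R n M :=
  monotone_nat_of_le_succ fun _ => fdLE_succ

lemma IsFlatMod.fdLE {M : ModuleCat.{0} R} (hM : IsFlatMod R M) (n : ℕ) : fdLE R n M :=
  monotone_fdLE M (Nat.zero_le n) hM

end Flat

section LnInjective

variable {R} {n m : ℕ}

lemma exists_shortExact {X Y Z : ModuleCat.{0} R} {f : X ⟶ Y} {g : Y ⟶ Z}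
    (hf : Function.Injective f) (hg : Function.Surjective g) (hfg : Function.Exact f g) :
    ∃ w : f ≫ g = 0, (ShortComplex.mk f g w).ShortExact :=
  ⟨by ext x; exact hfg.apply_apply_eq_zero x, ModuleCat.shortComplex_shortExact _ hfg hf hg⟩

lemma extVanish_succ_iff (M N : ModuleCat.{0} R) (i : ℕ) :
    extVanish R (i + 1) M N ↔ Subsingleton (Abelian.Ext.{0} M N (i + 1)) := by
  rw [extVanish, ← ModuleCat.isZero_iff_subsingleton, isZero_ext_succ_iff_subsingleton]

namespace LnInj

lemma of_injective (W : ModuleCat.{0} R) [Injective W] : LnInj R n W := fun M _ =>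
  (extVanish_succ_iff M W 0).mpr (Abelian.Ext.subsingleton_of_injective M W 0)

variable {W : ModuleCat.{0} R}

lemma subsingleton_ext_of_isFlatMod (hW : LnInj R n W) (i : ℕ) {F : ModuleCat.{0} R}
    (hF : IsFlatMod R F) : Subsingleton (Abelian.Ext.{0} F W (i + 1)) := by
  induction i generalizing F with
  | zero => exact (extVanish_succ_iff F W 0).mp (hW F (hF.fdLE n))
  | succ i ih =>
    have := ModuleCat.projective_of_free
      (Module.Free.chooseBasis R F.projectiveShortComplex.X₂)
    exact subsingleton_ext_X₃ F.shortExact_projectiveShortComplex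
      (ih hF.projectiveShortComplex_X₁_s16) (Abelian.Ext.subsingleton_of_projective _ W (i + 1))

lemma subsingleton_ext_s16 (hW : LnInj R n W) (i : ℕ) {M : ModuleCat.{0} R} (hM : fdLE R n M) :
    Subsingleton (Abelian.Ext.{0} M W (i + 1)) := by
  induction i generalizing M with
  | zero => exact (extVanish_succ_iff M W 0).mp (hW M hM)
  | succ i ih =>
    cases n with
    | zero => exact hW.subsingleton_ext_of_isFlatMod (i + 1) hM
    | succ n =>
      obtain ⟨K, F, f, g, hF, hf, hg, hfg, hK⟩ := hM
      obtain ⟨w, hS⟩ := exists_shortExact hf hg hfg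
      exact subsingleton_ext_X₃ hS (ih (fdLE_succ hK))
        (hW.subsingleton_ext_of_isFlatMod (i + 1) hF)

lemma forall_subsingleton_ext_X₁_iff {S : ShortComplex (ModuleCat.{0} R)} (hS : S.ShortExact)
    (hW : LnInj R n S.X₂) (i : ℕ) :
    (∀ M : ModuleCat.{0} R, fdLE R n M → Subsingleton (Abelian.Ext.{0} M S.X₁ (i + 2))) ↔
      ∀ M : ModuleCat.{0} R, fdLE R n M → Subsingleton (Abelian.Ext.{0} M S.X₃ (i + 1)) :=
  forall₂_congr fun _ hM =>
    subsingleton_ext_X₁_succ_iff hS (hW.subsingleton_ext_s16 i hM) (hW.subsingleton_ext_s16 (i + 1) hM)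

end LnInj

lemma lnidLE_iff_subsingleton_ext {N : ModuleCat.{0} R} :
    LnidLE R n m N ↔
      ∀ M : ModuleCat.{0} R, fdLE R n M → Subsingleton (Abelian.Ext.{0} M N (m + 1)) := by
  induction m generalizing N with
  | zero => exact forall₂_congr fun M _ => extVanish_succ_iff M N 0
  | succ m ih =>
    constructor
    · rintro ⟨W, C, f, g, hW, hf, hg, hfg, hC⟩
      obtain ⟨w, hS⟩ := exists_shortExact hf hg hfg
      exact (LnInj.forall_subsingleton_ext_X₁_iff hS hW m).mpr (ih.mp hC)
    · intro hN
      let I := (EnoughInjectives.presentation N).some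
      have hS := I.shortExact_shortComplex
      have hI : LnInj R n I.shortComplex.X₂ := have := I.injective; .of_injective I.J
      exact ⟨_, _, I.shortComplex.f, I.shortComplex.g, hI, hS.moduleCat_injective_f,
        hS.moduleCat_surjective_g,
        (ShortComplex.ShortExact.moduleCat_exact_iff_function_exact _).mp hS.exact,
        ih.mpr ((LnInj.forall_subsingleton_ext_X₁_iff hS hI m).mp hN)⟩

lemma lnidLE_succ_iff {A W C : ModuleCat.{0} R} {f : A ⟶ W} {g : W ⟶ C}
    (hf : Function.Injective f) (hg : Function.Surjective g) (hfg : Function.Exact f g)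
    (hW : LnInj R n W) : LnidLE R n (m + 1) A ↔ LnidLE R n m C := by
  obtain ⟨w, hS⟩ := exists_shortExact hf hg hfg
  rw [lnidLE_iff_subsingleton_ext, lnidLE_iff_subsingleton_ext]
  exact LnInj.forall_subsingleton_ext_X₁_iff hS hW m

lemma lnidLE_succ {N : ModuleCat.{0} R} (hN : LnidLE R n m N) : LnidLE R n (m + 1) N := by
  induction m generalizing N with
  | zero => exact lnidLE_iff_subsingleton_ext.mpr fun _ => LnInj.subsingleton_ext_s16 hN 1
  | succ m ih =>
    obtain ⟨W, C, f, g, hW, hf, hg, hfg, hC⟩ := hN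
    exact ⟨W, C, f, g, hW, hf, hg, hfg, ih hC⟩

lemma monotone_lnidLE (n : ℕ) (N : ModuleCat.{0} R) : Monotone fun m => LnidLE R n m N :=
  monotone_nat_of_le_succ fun _ => lnidLE_succ

lemma lnid_le_natCast_iff {N : ModuleCat.{0} R} : Lnid R n N ≤ m ↔ LnidLE R n m N := by
  refine ⟨fun h => ?_, fun h => sInf_le ⟨m, rfl, h⟩⟩
  obtain ⟨_, ⟨k, rfl, hk⟩, hkm⟩ := sInf_lt_iff.mp (ENat.lt_natCast_add_one_iff.mpr h)
  exact monotone_lnidLE n N (by exact_mod_cast ENat.lt_natCast_add_one_iff.mp hkm) hk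

end LnInjective

theorem stmt16_general (n : ℕ) (A W C : ModuleCat.{0} R) (f : A ⟶ W) (g : W ⟶ C)
    (hf : Function.Injective f) (hg : Function.Surjective g) (hfg : Function.Exact f g)
    (hW : LnInj R n W) :
    (LnInj R n A → LnInj R n C) ∧ (0 < Lnid R n A → Lnid R n A = Lnid R n C + 1) := by
  refine ⟨fun hA => (lnidLE_succ_iff (m := 0) hf hg hfg hW).mp (lnidLE_succ hA), fun hpos => ?_⟩
  suffices same_bounds : ∀ k : ℕ, Lnid R n A ≤ k ↔ Lnid R n C + 1 ≤ k from
    WithTop.eq_of_forall_le_coe_iff same_bounds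
  intro k
  cases k with
  | zero => simp [hpos.ne']
  | succ m =>
    calc Lnid R n A ≤ (m + 1 : ℕ)
        ↔ Lnid R n C ≤ m := by
          rw [lnid_le_natCast_iff, lnid_le_natCast_iff, lnidLE_succ_iff hf hg hfg hW]
      _ ↔ Lnid R n C + 1 ≤ (m + 1 : ℕ) := by
          rw [Nat.cast_succ, ENat.add_le_add_iff_right ENat.one_ne_top]

/-- Given a short exact sequence `0 → A → W → C → 0` with `W` `L_n`-injective:
if `A` is `L_n`-injective then so is `C`; and if the `L_n`-injective dimension of `A`
is positive and finite, then `L_n`-id(C) = `L_n`-id(A) - 1. -/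
theorem stmt16 (n : ℕ) (A W C : ModuleCat.{0} R) (f : A ⟶ W) (g : W ⟶ C)
    (hf : Function.Injective f) (hg : Function.Surjective g) (hfg : Function.Exact f g)
    (hW : LnInj R n W) :
    (LnInj R n A → LnInj R n C) ∧
      (0 < Lnid R n A → Lnid R n A ≠ ⊤ → Lnid R n C = Lnid R n A - 1) := by
  obtain ⟨hInj, hId⟩ := stmt16_general R n A W C f g hf hg hfg hW
  exact ⟨hInj, fun hpos _ => by
    rw [hId hpos, (ENat.addLECancellable_of_ne_top ENat.one_ne_top).add_tsub_cancel_right]⟩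
end
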